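/- An M-biquadratic tensor is positive semi-definite, and a strong M-biquadratic tensor is positive definite. -/

import Mathlib

noncomputable section
open Finset

/-- The biquadratic form of a biquadratic tensor. -/
def bqForm {m n : ℕ} (A : Fin m → Fin n → Fin m → Fin n → ℝ)
    (x : Fin m → ℝ) (y : Fin n → ℝ) : ℝ :=
  ∑ i1, ∑ j1, ∑ i2, ∑ j2, A i1 j1 i2 j2 * x i1 * y j1 * x i2 * y j2

/-- (λ, x, y) is an M-eigenpair of the biquadratic tensor A. -/
def IsMEigenpair {m n : ℕ} (A : Fin m → Fin n → Fin m → Fin n → ℝ)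
    (lam : ℝ) (x : Fin m → ℝ) (y : Fin n → ℝ) : Prop :=
  (∑ i, x i ^ 2 = 1) ∧ (∑ j, y j ^ 2 = 1) ∧
  (∀ i, (∑ i1, ∑ j1, ∑ j2, A i1 j1 i j2 * x i1 * y j1 * y j2)
      + (∑ i2, ∑ j1, ∑ j2, A i j1 i2 j2 * y j1 * x i2 * y j2) = 2 * lam * x i) ∧
  (∀ j, (∑ i1, ∑ i2, ∑ j1, A i1 j1 i2 j * x i1 * y j1 * x i2)
      + (∑ i1, ∑ i2, ∑ j2, A i1 j i2 j2 * x i1 * x i2 * y j2) = 2 * lam * y j)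

/-- λ is an M-eigenvalue of A. -/
def IsMEigenvalue {m n : ℕ} (A : Fin m → Fin n → Fin m → Fin n → ℝ) (lam : ℝ) : Prop :=
  ∃ x y, IsMEigenpair A lam x y

/-- A is a positive semi-definite biquadratic tensor. -/
def BQPosSemidef {m n : ℕ} (A : Fin m → Fin n → Fin m → Fin n → ℝ) : Prop :=
  ∀ x y, 0 ≤ bqForm A x y

/-- A is a positive definite biquadratic tensor. -/
def BQPosDef {m n : ℕ} (A : Fin m → Fin n → Fin m → Fin n → ℝ) : Prop :=
  ∀ x y, (∑ i, x i ^ 2 = 1) → (∑ j, y j ^ 2 = 1) → 0 < bqForm A x y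

/-- The M-identity tensor. -/
def bqId {m n : ℕ} : Fin m → Fin n → Fin m → Fin n → ℝ :=
  fun i1 j1 i2 j2 => if i1 = i2 ∧ j1 = j2 then 1 else 0

/-- A is an M-biquadratic tensor: A = αI − B with B nonnegative and α ≥ λ_max(B). -/
def IsMBQTensor {m n : ℕ} (A : Fin m → Fin n → Fin m → Fin n → ℝ) : Prop :=
  ∃ (α : ℝ) (B : Fin m → Fin n → Fin m → Fin n → ℝ),
    (∀ i1 j1 i2 j2, 0 ≤ B i1 j1 i2 j2) ∧
    (∀ i1 j1 i2 j2, A i1 j1 i2 j2 = α * bqId i1 j1 i2 j2 - B i1 j1 i2 j2) ∧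
    (∀ mu, IsMEigenvalue B mu → mu ≤ α)

/-- A is a strong M-biquadratic tensor: A = αI − B with B nonnegative and α > λ_max(B). -/
def IsStrongMBQTensor {m n : ℕ} (A : Fin m → Fin n → Fin m → Fin n → ℝ) : Prop :=
  ∃ (α : ℝ) (B : Fin m → Fin n → Fin m → Fin n → ℝ),
    (∀ i1 j1 i2 j2, 0 ≤ B i1 j1 i2 j2) ∧
    (∀ i1 j1 i2 j2, A i1 j1 i2 j2 = α * bqId i1 j1 i2 j2 - B i1 j1 i2 j2) ∧
    (∀ mu, IsMEigenvalue B mu → mu < α)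

def mbqQuad {k : ℕ} (C : Fin k → Fin k → ℝ) (x : Fin k → ℝ) : ℝ :=
  ∑ i, ∑ j, C i j * x i * x j

lemma mbqQuad_smul {k : ℕ} (C : Fin k → Fin k → ℝ) (x : Fin k → ℝ) (t : ℝ) :
    mbqQuad C (fun i => t * x i) = t ^ 2 * mbqQuad C x := by
  unfold mbqQuad
  simp only [Finset.mul_sum]
  refine Finset.sum_congr rfl fun i _ => Finset.sum_congr rfl fun j _ => ?_
  ring

lemma mbqQuad_le {k : ℕ} (C : Fin k → Fin k → ℝ) (M : ℝ)
    (h : ∀ x : Fin k → ℝ, ∑ i, x i ^ 2 = 1 → mbqQuad C x ≤ M) (x : Fin k → ℝ) :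
    mbqQuad C x ≤ M * ∑ i, x i ^ 2 := by
  have hs : 0 ≤ ∑ i, x i ^ 2 := by positivity
  rcases hs.eq_or_lt with h0 | hpos
  · have hx : ∀ i, x i = 0 := by
      intro i
      have := (Finset.sum_eq_zero_iff_of_nonneg (fun i _ => sq_nonneg (x i))).1 h0.symm i
        (Finset.mem_univ i)
      simpa using this
    simp [mbqQuad, hx]
  · have hr := Real.sq_sqrt hs
    have hrp := Real.sqrt_pos.2 hpos
    set r := Real.sqrt (∑ i, x i ^ 2) with hrdef
    have hu : ∑ i, (r⁻¹ * x i) ^ 2 = 1 := by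
      simp only [mul_pow, ← Finset.mul_sum]
      rw [← hr]
      field_simp
    have h1 := h (fun i => r⁻¹ * x i) hu
    rw [mbqQuad_smul] at h1
    rw [← hr]
    have h2 := mul_le_mul_of_nonneg_right h1 (sq_nonneg r)
    have h3 : r⁻¹ ^ 2 * mbqQuad C x * r ^ 2 = mbqQuad C x := by field_simp
    linarith

lemma mbq_lin_zero (b c : ℝ) (h : ∀ t : ℝ, 0 ≤ b * t + c * t ^ 2) : b = 0 := by
  have := discrim_le_zero (a := c) (b := b) (c := 0) (fun t => by have := h t; linarith)
  simp only [discrim] at this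
  nlinarith [sq_nonneg b]

lemma mbqQuad_crit {k : ℕ} (C : Fin k → Fin k → ℝ) (M : ℝ) (x : Fin k → ℝ)
    (h : ∀ z : Fin k → ℝ, mbqQuad C z ≤ M * ∑ i, z i ^ 2)
    (hx : mbqQuad C x = M * ∑ i, x i ^ 2) (i : Fin k) :
    ∑ j, C j i * x j + ∑ j, C i j * x j = 2 * M * x i := by
  have key : 2 * M * x i - (∑ j, C j i * x j + ∑ j, C i j * x j) = 0 := by
    refine mbq_lin_zero _ (M - C i i) fun t => ?_
    have h1 := h (fun l => x l + t * (if l = i then 1 else 0))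
    have e1 : mbqQuad C (fun l => x l + t * (if l = i then 1 else 0)) =
        mbqQuad C x + t * (∑ j, C j i * x j + ∑ j, C i j * x j) + t ^ 2 * C i i := by
      have : ∀ a b, C a b * (x a + t * (if a = i then 1 else 0)) *
          (x b + t * (if b = i then 1 else 0)) =
          C a b * x a * x b + (if b = i then t * (C a b * x a) else 0)
          + (if a = i then t * (C a b * x b) else 0)
          + (if a = i then (if b = i then t ^ 2 * C a b else 0) else 0) := by
        intro a b
        split_ifs <;> ring
      unfold mbqQuad
      simp only [this, Finset.sum_add_distrib]
      have e : ∀ f : Fin k → Fin k → ℝ, ∑ a, ∑ b, (if a = i then f a b else 0) = ∑ b, f i b := by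
        intro f
        rw [Finset.sum_comm]
        simp
      rw [e, e]
      simp [← Finset.mul_sum]
      ring
    have e2 : ∑ l, (x l + t * (if l = i then 1 else 0)) ^ 2 =
        ∑ l, x l ^ 2 + 2 * t * x i + t ^ 2 := by
      have : ∀ l, (x l + t * (if l = i then 1 else 0)) ^ 2 =
          x l ^ 2 + (if l = i then 2 * t * x l + t ^ 2 else 0) := by
        intro l
        split_ifs <;> ring
      simp only [this, Finset.sum_add_distrib]
      simp
      ring
    rw [e1, e2] at h1
    nlinarith
  linarith

lemma bq_eq_x {m n : ℕ} (B : Fin m → Fin n → Fin m → Fin n → ℝ) (x : Fin m → ℝ) (y : Fin n → ℝ) :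
    bqForm B x y = mbqQuad (fun i1 i2 => ∑ j1, ∑ j2, B i1 j1 i2 j2 * y j1 * y j2) x := by
  unfold bqForm mbqQuad
  refine Finset.sum_congr rfl fun i1 _ => ?_
  rw [Finset.sum_comm]
  refine Finset.sum_congr rfl fun i2 _ => ?_
  simp only [Finset.sum_mul]
  refine Finset.sum_congr rfl fun j1 _ => Finset.sum_congr rfl fun j2 _ => ?_
  ring

lemma bq_eq_y {m n : ℕ} (B : Fin m → Fin n → Fin m → Fin n → ℝ) (x : Fin m → ℝ) (y : Fin n → ℝ) :
    bqForm B x y = mbqQuad (fun j1 j2 => ∑ i1, ∑ i2, B i1 j1 i2 j2 * x i1 * x i2) y := by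
  unfold bqForm mbqQuad
  rw [Finset.sum_comm]
  refine Finset.sum_congr rfl fun j1 _ => ?_
  simp only [Finset.sum_mul]
  rw [Finset.sum_comm (s := (Finset.univ : Finset (Fin n)))]
  refine Finset.sum_congr rfl fun i1 _ => ?_
  rw [Finset.sum_comm]
  refine Finset.sum_congr rfl fun j2 _ => Finset.sum_congr rfl fun i2 _ => ?_
  ring

lemma bq_le_all {m n : ℕ} {B : Fin m → Fin n → Fin m → Fin n → ℝ} {M : ℝ}
    (h : ∀ x y, (∑ i, x i ^ 2 = 1) → (∑ j, y j ^ 2 = 1) → bqForm B x y ≤ M)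
    (x : Fin m → ℝ) (y : Fin n → ℝ) :
    bqForm B x y ≤ M * ((∑ i, x i ^ 2) * (∑ j, y j ^ 2)) := by
  have h1 : ∀ x y, (∑ i, x i ^ 2 = 1) → bqForm B x y ≤ M * ∑ j, y j ^ 2 := by
    intro x y hx
    rw [bq_eq_y]
    exact mbqQuad_le _ _ (fun z hz => by rw [← bq_eq_y]; exact h x z hx hz) y
  rw [bq_eq_x]
  refine (mbqQuad_le _ (M * ∑ j, y j ^ 2)
    (fun z hz => by rw [← bq_eq_x]; exact h1 z y hz) x).trans (le_of_eq (by ring))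

lemma mbq_sphere {k : ℕ} (hk : 0 < k) :
    IsCompact {x : Fin k → ℝ | ∑ i, x i ^ 2 = 1} ∧ {x : Fin k → ℝ | ∑ i, x i ^ 2 = 1}.Nonempty := by
  constructor
  · refine Metric.isCompact_of_isClosed_isBounded
      (isClosed_eq (by fun_prop) continuous_const) ?_
    refine (Metric.isBounded_closedBall (x := (0 : Fin k → ℝ)) (r := 1)).subset fun x hx => ?_
    rw [mem_closedBall_zero_iff, pi_norm_le_iff_of_nonneg zero_le_one]
    intro i
    have : x i ^ 2 ≤ 1 := by
      rw [← (show ∑ i, x i ^ 2 = 1 from hx)]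
      exact Finset.single_le_sum (f := fun i => x i ^ 2) (fun i _ => sq_nonneg (x i))
        (Finset.mem_univ i)
    rw [Real.norm_eq_abs]
    exact (sq_le_one_iff_abs_le_one _).1 this
  · refine ⟨fun i => if i = ⟨0, hk⟩ then 1 else 0, ?_⟩
    simp

lemma bq_max_eigen {m n : ℕ} (B : Fin m → Fin n → Fin m → Fin n → ℝ)
    (x : Fin m → ℝ) (y : Fin n → ℝ) (hx : ∑ i, x i ^ 2 = 1) (hy : ∑ i, y i ^ 2 = 1)
    (hle : ∀ x' y', (∑ i, x' i ^ 2 = 1) → (∑ j, y' j ^ 2 = 1) →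
      bqForm B x' y' ≤ bqForm B x y) : IsMEigenpair B (bqForm B x y) x y := by
  have hall := bq_le_all hle
  refine ⟨hx, hy, fun i => ?_, fun j => ?_⟩
  · rw [← mbqQuad_crit (fun i1 i2 => ∑ j1, ∑ j2, B i1 j1 i2 j2 * y j1 * y j2) (bqForm B x y) x
      (fun z => by rw [← bq_eq_x]; simpa [hy] using hall z y) (by rw [← bq_eq_x, hx, mul_one]) i]
    simp only [Finset.sum_mul]
    congr 1 <;>
    · refine Finset.sum_congr rfl fun _ _ => Finset.sum_congr rfl fun _ _ =>
        Finset.sum_congr rfl fun _ _ => ?_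
      ring
  · rw [← mbqQuad_crit (fun j1 j2 => ∑ i1, ∑ i2, B i1 j1 i2 j2 * x i1 * x i2) (bqForm B x y) y
      (fun z => by rw [← bq_eq_y]; simpa [hx] using hall x z) (by rw [← bq_eq_y, hy, mul_one]) j]
    simp only [Finset.sum_mul]
    congr 1 <;>
    · symm
      rw [Finset.sum_comm]
      refine Finset.sum_congr rfl fun _ _ => ?_
      refine Finset.sum_comm.trans ?_
      refine Finset.sum_congr rfl fun _ _ => Finset.sum_congr rfl fun _ _ => ?_
      ring

lemma bq_exists_max {m n : ℕ} (hm : 0 < m) (hn : 0 < n)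
    (B : Fin m → Fin n → Fin m → Fin n → ℝ) :
    ∃ M, IsMEigenvalue B M ∧
      ∀ x y, (∑ i, x i ^ 2 = 1) → (∑ j, y j ^ 2 = 1) → bqForm B x y ≤ M := by
  obtain ⟨c1, n1⟩ := mbq_sphere hm
  obtain ⟨c2, n2⟩ := mbq_sphere hn
  have hc : Continuous fun p : (Fin m → ℝ) × (Fin n → ℝ) => bqForm B p.1 p.2 := by
    unfold bqForm
    fun_prop
  obtain ⟨p, hp, hmax⟩ := (c1.prod c2).exists_isMaxOn (n1.prod n2) hc.continuousOn
  have hle : ∀ x' y', (∑ i, x' i ^ 2 = 1) → (∑ j, y' j ^ 2 = 1) →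
      bqForm B x' y' ≤ bqForm B p.1 p.2 := fun x' y' hx' hy' =>
    isMaxOn_iff.1 hmax (x', y') (Set.mk_mem_prod hx' hy')
  exact ⟨_, ⟨p.1, p.2, bq_max_eigen B p.1 p.2 hp.1 hp.2 hle⟩, hle⟩

lemma bq_sub {m n : ℕ} {A B : Fin m → Fin n → Fin m → Fin n → ℝ} {α : ℝ}
    (h : ∀ i1 j1 i2 j2, A i1 j1 i2 j2 = α * bqId i1 j1 i2 j2 - B i1 j1 i2 j2)
    (x : Fin m → ℝ) (y : Fin n → ℝ) :
    bqForm A x y = α * ((∑ i, x i ^ 2) * (∑ j, y j ^ 2)) - bqForm B x y := by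
  unfold bqForm
  simp only [h, sub_mul, Finset.sum_sub_distrib]
  congr 1
  rw [Finset.sum_mul_sum, Finset.mul_sum]
  refine Finset.sum_congr rfl fun i _ => ?_
  rw [Finset.mul_sum]
  refine Finset.sum_congr rfl fun j _ => ?_
  rw [Finset.sum_eq_single i, Finset.sum_eq_single j]
  · simp [bqId]; ring
  · intro b _ hb
    simp [bqId, hb.symm]
  · simp
  · intro b _ hb
    simp [bqId, hb.symm]
  · simp

/-- An M-biquadratic tensor is positive semi-definite, and a strong M-biquadratic
tensor is positive definite. -/
theorem mbq_posSemidef {m n : ℕ} (hm : 2 ≤ m) (hn : 2 ≤ n)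
    (A : Fin m → Fin n → Fin m → Fin n → ℝ) :
    (IsMBQTensor A → BQPosSemidef A) ∧ (IsStrongMBQTensor A → BQPosDef A) := by
  refine ⟨?_, ?_⟩
  · rintro ⟨α, B, -, hA, hB⟩ x y
    obtain ⟨M, hM, hle⟩ := bq_exists_max (by omega) (by omega) B
    rw [bq_sub hA]
    have h1 := bq_le_all hle x y
    have h2 := hB M hM
    have h3 : 0 ≤ (∑ i, x i ^ 2) * (∑ j, y j ^ 2) := by positivity
    nlinarith [mul_le_mul_of_nonneg_right h2 h3]
  · rintro ⟨α, B, -, hA, hB⟩ x y hx hy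
    obtain ⟨M, hM, hle⟩ := bq_exists_max (by omega) (by omega) B
    rw [bq_sub hA, hx, hy]
    have h1 := hle x y hx hy
    have h2 := hB M hM
    linarith
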